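/- Let α > 0. (a) If α = 1, then for every ε ∈ (0,1/2) the pair (ν_1^n, W_{1,ε}) satisfies the τ-property, where W_{1,ε}(x) = Σ_{i=1}^n w_ε(x_i) and w_ε(t) = (ε e^{-1/ε}/8) t² if |t| ≤ 2/ε², and w_ε(t) = (1−2ε)|t| if |t| > 2/ε². (b) If α ≠ 1, there exist constants κ > 0 and ε₀ ∈ (0,1), depending only on α, such that for every ε ∈ (0,ε₀), every m ≥ 1 and every n, the pair (ν_α^n, W_{α,ε}^{(m)}) satisfies the m B_{ℓ^∞}-truncated τ-property, where W_{α,ε}^{(m)}(x) = Σ_{i=1}^n w_{α,ε}^{(m)}(x_i) and w_{α,ε}^{(m)}(t) = κ^{-1} e^{-(m/ε)^{α/2}} t² if |t| ≤ m/ε, and w_{α,ε}^{(m)}(t) = (1 − κ ε^{(α/2)∧1}) |t|^α if |t| > m/ε. -/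

import Mathlib

open MeasureTheory Filter Topology Pointwise

noncomputable section

/-- The (unnormalized) measure on `ℝ` with density `exp (-|x|^α)`. -/
def nuKernel (α : ℝ) : Measure ℝ :=
  volume.withDensity fun x => ENNReal.ofReal (Real.exp (-|x| ^ α))

/-- The probability measure `ν_α` on `ℝ`. -/
def nuAlpha (α : ℝ) : Measure ℝ := (nuKernel α Set.univ)⁻¹ • nuKernel α

/-- The `n`-fold product measure `ν_α^n` on `ℝ^n`. -/
def nuPi (α : ℝ) (n : ℕ) : Measure (Fin n → ℝ) := Measure.pi fun _ => nuAlpha α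

/-- `exp : ℝ≥0∞ → ℝ≥0∞` (for extended-valued exponents), with `exp ⊤ = ⊤`. -/
def eexp (x : ENNReal) : ENNReal :=
  if x = ⊤ then ⊤ else ENNReal.ofReal (Real.exp x.toReal)

/-- `x ↦ exp (-x)` for `x : ℝ≥0∞`, with `exp (-⊤) = 0`. -/
def eexpNeg (x : ENNReal) : ENNReal :=
  if x = ⊤ then 0 else ENNReal.ofReal (Real.exp (-x.toReal))

/-- Inf-convolution `f □ w (x) = inf_y (f y + w (x - y))` of an extended-valued
function `f` with a nonnegative real weight `w`. -/
def infConv {n : ℕ} (f : (Fin n → ℝ) → ENNReal) (w : (Fin n → ℝ) → ℝ)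
    (x : Fin n → ℝ) : ENNReal :=
  ⨅ y : Fin n → ℝ, f y + ENNReal.ofReal (w (x - y))

/-- `(ν, w)` satisfies the τ-property: for every nonnegative measurable `f`,
`(∫ e^{f □ w} dν) (∫ e^{-f} dν) ≤ 1`. -/
def TauProperty {n : ℕ} (ν : Measure (Fin n → ℝ)) (w : (Fin n → ℝ) → ℝ) : Prop :=
  ∀ f : (Fin n → ℝ) → ENNReal, Measurable f →
    (∫⁻ x, eexp (infConv f w x) ∂ν) * (∫⁻ x, eexpNeg (f x) ∂ν) ≤ 1

/-- `(ν, w)` satisfies the `A₀`-truncated τ-property: the same inequality for every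
nonnegative measurable `f` which is `+∞` outside `A₀`. -/
def TruncatedTauProperty {n : ℕ} (ν : Measure (Fin n → ℝ)) (w : (Fin n → ℝ) → ℝ)
    (A₀ : Set (Fin n → ℝ)) : Prop :=
  ∀ f : (Fin n → ℝ) → ENNReal, Measurable f → (∀ x ∉ A₀, f x = ⊤) →
    (∫⁻ x, eexp (infConv f w x) ∂ν) * (∫⁻ x, eexpNeg (f x) ∂ν) ≤ 1

/-- The one-dimensional weight `w_ε` for `α = 1`. -/
def wExp (ε t : ℝ) : ℝ :=
  if |t| ≤ 2 / ε ^ 2 then ε * Real.exp (-1/ε) * t ^ 2 / 8 else (1 - 2 * ε) * |t|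

/-- The one-dimensional weight `w_{α,ε}^{(m)}` for `α ≠ 1`. -/
def wAlpha (α κ ε m t : ℝ) : ℝ :=
  if |t| ≤ m / ε then κ⁻¹ * Real.exp (-(m / ε) ^ (α / 2)) * t ^ 2
  else (1 - κ * ε ^ (min (α / 2) 1)) * |t| ^ α

/-- The `ℓ^∞`-ball of radius `m` in `ℝ^n`. -/
def linftyBall (m : ℝ) (n : ℕ) : Set (Fin n → ℝ) := {h | ∀ i, |h i| ≤ m}

/-!
The odd map `u ↦ sign u * (1 - exp (-l |u|))` carries `ν_1` to a symmetric beta law on `(-1, 1)`,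
whose density `ρ` is a power of `1 - |s|`. The Prékopa–Leindler inequality at `λ = 1 / 2` gives
`(∫ h) (∫ g) ≤ 1` for this law as soon as `h s * g t ≤ ρ ((s + t) / 2) ^ 2 / (ρ s * ρ t)`. Pulled
back to `ν_1`, this kernel dominates the exponential of `2 ((1 - l) / l) log cosh (l (u - v) / 2)`,
so `ν_1` has the τ-property with a cost which is quadratic near `0` and of slope `1 - l` at
infinity. The inequality tensorizes, and it passes to `ν_α` along the increasing map `θ` carrying
`ν_α` to `ν_1`, with `θ x - θ y` in place of `u - v`.

For `α = 1` take `l = ε`. In general take `l = (m / ε) ^ (-α / 2)`: when `|x - y| ≤ m / ε` the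
slope of `θ` is bounded below by tail estimates, and when `|x - y| > m / ε` the truncation
`|y| ≤ m` makes both `θ y` and the passage from `|x| ^ α` to `|x - y| ^ α` negligible.
-/

open scoped ENNReal

/-! ### The Prékopa–Leindler inequality on the line -/

theorem volume_add_volume_le_of_isCompact {A B : Set ℝ} (hA : IsCompact A) (hB : IsCompact B)
    (hA' : A.Nonempty) (hB' : B.Nonempty) : volume A + volume B ≤ volume (A + B) := by
  obtain ⟨a, ha, ha_max⟩ := hA.exists_isGreatest hA'
  obtain ⟨b, hb, hb_min⟩ := hB.exists_isLeast hB'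
  -- The translates `b + A` and `a + B` lie in `A + B` and meet only at `a + b`.
  have hdisj : AEDisjoint volume ((b + ·) '' A) ((a + ·) '' B) := by
    refine measure_mono_null (t := {a + b}) ?_ (by simp)
    rintro _ ⟨⟨x, hx, rfl⟩, y, hy, hxy⟩
    have hxa := ha_max hx
    have hby := hb_min hy
    simp only [Set.mem_singleton_iff] at *
    linarith
  calc volume A + volume B = volume ((b + ·) '' A) + volume ((a + ·) '' B) := by
        simp [measure_preimage_add, Set.image_add_left]
    _ = volume ((b + ·) '' A ∪ (a + ·) '' B) :=
        (measure_union₀ (hB.image (by fun_prop)).measurableSet.nullMeasurableSet hdisj).symm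
    _ ≤ volume (A + B) := by
        refine measure_mono (Set.union_subset ?_ ?_)
        · rintro _ ⟨x, hx, rfl⟩
          exact ⟨x, hx, b, hb, add_comm _ _⟩
        · exact Set.image_subset_iff.2 fun x hx => Set.add_mem_add ha hx

theorem volume_add_volume_le {A B : Set ℝ} (hA : MeasurableSet A) (hB : MeasurableSet B)
    (hA' : A.Nonempty) (hB' : B.Nonempty) : volume A + volume B ≤ volume (A + B) := by
  obtain ⟨a, ha⟩ := hA'
  obtain ⟨b, hb⟩ := hB'
  rw [hA.measure_eq_iSup_isCompact, hB.measure_eq_iSup_isCompact]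
  simp only [iSup_and']
  refine ENNReal.biSup_add_biSup_le' ⟨∅, by simp⟩ ⟨∅, by simp⟩ fun K ⟨hKA, hK⟩ L ⟨hLB, hL⟩ => ?_
  calc volume K + volume L ≤ volume (insert a K) + volume (insert b L) := by
        gcongr <;> exact Set.subset_insert _ _
    _ ≤ volume (insert a K + insert b L) :=
        volume_add_volume_le_of_isCompact (hK.insert a) (hL.insert b)
          (Set.insert_nonempty _ _) (Set.insert_nonempty _ _)
    _ ≤ volume (A + B) :=
        measure_mono (Set.add_subset_add (Set.insert_subset ha hKA) (Set.insert_subset hb hLB))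

theorem lintegral_eq_lintegral_measure_ofReal_lt {X : Type*} [MeasurableSpace X] (μ : Measure X)
    {f : X → ℝ≥0∞} (hf : Measurable f) :
    ∫⁻ x, f x ∂μ = ∫⁻ t in Set.Ioi (0 : ℝ), μ {x | ENNReal.ofReal t < f x} := by
  by_cases hfin : μ {x | f x = ∞} = 0
  · have hae : ∀ᵐ x ∂μ, f x ≠ ∞ := by simpa [ae_iff] using hfin
    calc ∫⁻ x, f x ∂μ = ∫⁻ x, ENNReal.ofReal (f x).toReal ∂μ :=
          lintegral_congr_ae (hae.mono fun x hx => (ENNReal.ofReal_toReal hx).symm)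
      _ = ∫⁻ t in Set.Ioi (0 : ℝ), μ {x | t < (f x).toReal} :=
          lintegral_eq_lintegral_meas_lt μ (ae_of_all _ fun _ => ENNReal.toReal_nonneg)
            hf.ennreal_toReal.aemeasurable
      _ = _ := by
          refine setLIntegral_congr_fun measurableSet_Ioi fun t ht => measure_congr ?_
          filter_upwards [hae] with x hx
          exact propext (ENNReal.ofReal_lt_iff_lt_toReal (le_of_lt ht) hx).symm
  · rw [lintegral_eq_top_of_measure_eq_top_ne_zero hf.aemeasurable hfin, eq_comm, eq_top_iff]
    calc ∞ = ∫⁻ _ in Set.Ioi (0 : ℝ), μ {x | f x = ∞} := by simp [ENNReal.mul_top hfin]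
      _ ≤ _ := lintegral_mono fun t => measure_mono fun x (hx : f x = ∞) => by simp [hx]

section PrekopaLeindler

variable {a b k : ℝ → ℝ≥0∞} {p q : ℝ}

theorem smul_superlevelSet_add_subset (hp : 0 < p) (hq : 0 < q) (hpq : p + q = 1)
    (h : ∀ s t, a s ^ p * b t ^ q ≤ k (p * s + q * t)) {r : ℝ≥0∞} :
    p • {s | r < a s} + q • {s | r < b s} ⊆ {s | r < k s} := by
  rintro _ ⟨_, ⟨s, hs, rfl⟩, _, ⟨t, ht, rfl⟩, rfl⟩
  calc r = r ^ p * r ^ q := by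
        rw [← ENNReal.rpow_add_of_nonneg _ _ hp.le hq.le, hpq, ENNReal.rpow_one]
    _ < a s ^ p * b t ^ q :=
        ENNReal.mul_lt_mul (ENNReal.rpow_lt_rpow hs hp) (ENNReal.rpow_lt_rpow ht hq)
    _ ≤ k (p * s + q * t) := h s t

theorem lintegral_add_lintegral_le_of_iSup_eq_one (ha : Measurable a) (hb : Measurable b)
    (hk : Measurable k) (hp : 0 < p) (hq : 0 < q) (hpq : p + q = 1) (ha1 : ⨆ s, a s = 1)
    (hb1 : ⨆ s, b s = 1) (h : ∀ s t, a s ^ p * b t ^ q ≤ k (p * s + q * t)) :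
    ENNReal.ofReal p * (∫⁻ s, a s) + ENNReal.ofReal q * ∫⁻ s, b s ≤ ∫⁻ s, k s := by
  have hmeas : ∀ f : ℝ → ℝ≥0∞, Measurable fun t : ℝ => volume {s | ENNReal.ofReal t < f s} :=
    fun f => Antitone.measurable fun t u htu =>
      measure_mono fun s hs => (ENNReal.ofReal_le_ofReal htu).trans_lt hs
  simp only [lintegral_eq_lintegral_measure_ofReal_lt volume, ha, hb, hk]
  rw [← lintegral_const_mul _ (hmeas a), ← lintegral_const_mul _ (hmeas b),
    ← lintegral_add_left ((hmeas a).const_mul _)]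
  refine lintegral_mono fun t => ?_
  set r := ENNReal.ofReal t
  rcases lt_or_ge r 1 with hr | hr
  · obtain ⟨s₁, hs₁⟩ := lt_iSup_iff.1 (ha1 ▸ hr)
    obtain ⟨s₂, hs₂⟩ := lt_iSup_iff.1 (hb1 ▸ hr)
    have hvol : ∀ (A : Set ℝ) {c : ℝ}, 0 < c → ENNReal.ofReal c * volume A = volume (c • A) :=
      fun A c hc => by simp [Measure.addHaar_smul, abs_of_pos hc]
    rw [hvol _ hp, hvol _ hq]
    refine (volume_add_volume_le ?_ ?_ ?_ ?_).trans
      (measure_mono (smul_superlevelSet_add_subset hp hq hpq h))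
    · exact (measurableSet_lt measurable_const ha).const_smul₀ p
    · exact (measurableSet_lt measurable_const hb).const_smul₀ q
    · exact Set.Nonempty.smul_set ⟨s₁, hs₁⟩
    · exact Set.Nonempty.smul_set ⟨s₂, hs₂⟩
  · have hempty : ∀ f : ℝ → ℝ≥0∞, ⨆ s, f s = 1 → {s | r < f s} = ∅ := fun f hf =>
      Set.eq_empty_of_forall_notMem fun s hs =>
        not_lt_of_ge hr (lt_of_lt_of_le hs (hf ▸ le_iSup f s))
    simp [hempty a ha1, hempty b hb1]

theorem rpow_mul_rpow_le_add (hp : 0 < p) (hq : 0 < q) (hpq : p + q = 1) (x y : ℝ≥0∞) :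
    x ^ p * y ^ q ≤ ENNReal.ofReal p * x + ENNReal.ofReal q * y := by
  have h := ENNReal.young_inequality (p := p⁻¹) (q := q⁻¹) (x ^ p) (y ^ q)
    (Real.holderConjugate_iff.2 ⟨(one_lt_inv₀ hp).2 (by linarith), by simpa using hpq⟩)
  rwa [ENNReal.rpow_rpow_inv hp.ne', ENNReal.rpow_rpow_inv hq.ne', ENNReal.ofReal_inv_of_pos hp,
    ENNReal.ofReal_inv_of_pos hq, div_eq_mul_inv, div_eq_mul_inv, inv_inv, inv_inv, mul_comm x,
    mul_comm y] at h

theorem prekopa_leindler_of_iSup_ne_top (ha : Measurable a) (hb : Measurable b)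
    (hk : Measurable k) (hp : 0 < p) (hq : 0 < q) (hpq : p + q = 1) (ha' : ⨆ s, a s ≠ ∞)
    (hb' : ⨆ s, b s ≠ ∞) (h : ∀ s t, a s ^ p * b t ^ q ≤ k (p * s + q * t)) :
    (∫⁻ s, a s) ^ p * (∫⁻ s, b s) ^ q ≤ ∫⁻ s, k s := by
  rcases eq_or_ne (⨆ s, a s) 0 with ha0 | ha0
  · simp [ENNReal.iSup_eq_zero.1 ha0, hp]
  rcases eq_or_ne (⨆ s, b s) 0 with hb0 | hb0
  · simp [ENNReal.iSup_eq_zero.1 hb0, hq]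
  set A := ⨆ s, a s
  set B := ⨆ s, b s
  have hdiv : ∀ x y : ℝ≥0∞, (x / A) ^ p * (y / B) ^ q = x ^ p * y ^ q / (A ^ p * B ^ q) := by
    intro x y
    rw [ENNReal.div_rpow_of_nonneg _ _ hp.le, ENNReal.div_rpow_of_nonneg _ _ hq.le,
      ENNReal.mul_div_mul_comm (Or.inr (by simp [hb0, hb'])) (Or.inl (by simp [ha0, ha']))]
  have hC0 : A ^ p * B ^ q ≠ 0 := by simp [ha0, hb0, ha', hb']
  have hC : A ^ p * B ^ q ≠ ∞ := by finiteness
  suffices (∫⁻ s, a s) ^ p * (∫⁻ s, b s) ^ q / (A ^ p * B ^ q)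
      ≤ (∫⁻ s, k s) / (A ^ p * B ^ q) by
    rwa [ENNReal.div_le_iff hC0 hC, ENNReal.div_mul_cancel hC0 hC] at this
  have hadd := lintegral_add_lintegral_le_of_iSup_eq_one (ha.div_const A) (hb.div_const B)
    (hk.div_const (A ^ p * B ^ q)) hp hq hpq
    (by rw [← ENNReal.iSup_div, ENNReal.div_self ha0 ha'])
    (by rw [← ENNReal.iSup_div, ENNReal.div_self hb0 hb'])
    (fun s t => by rw [hdiv]; exact ENNReal.div_le_div_right (h s t) _)
  simp only [div_eq_mul_inv, lintegral_mul_const _ ha, lintegral_mul_const _ hb,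
    lintegral_mul_const _ hk] at hadd
  rw [← hdiv]
  exact (rpow_mul_rpow_le_add hp hq hpq _ _).trans hadd

theorem prekopa_leindler (ha : Measurable a) (hb : Measurable b) (hk : Measurable k)
    (hp : 0 < p) (hq : 0 < q) (hpq : p + q = 1)
    (h : ∀ s t, a s ^ p * b t ^ q ≤ k (p * s + q * t)) :
    (∫⁻ s, a s) ^ p * (∫⁻ s, b s) ^ q ≤ ∫⁻ s, k s := by
  rcases eq_or_ne (∫⁻ s, a s) 0 with ha0 | ha0
  · simp [ha0, hp]
  rcases eq_or_ne (∫⁻ s, b s) 0 with hb0 | hb0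
  · simp [hb0, hq]
  have hlim : ∀ f : ℝ → ℝ≥0∞, Measurable f →
      Tendsto (fun n : ℕ => ∫⁻ s, min (f s) n) atTop (𝓝 (∫⁻ s, f s)) := fun f hf =>
    lintegral_tendsto_of_tendsto_of_monotone (fun n => (hf.min measurable_const).aemeasurable)
      (ae_of_all _ fun s m n hmn => min_le_min le_rfl (by exact_mod_cast hmn))
      (ae_of_all _ fun s => by
        simpa using (tendsto_const_nhds (x := f s)).min ENNReal.tendsto_nat_nhds_top)
  have hsup : ∀ (f : ℝ → ℝ≥0∞) (n : ℕ), ⨆ s, min (f s) n ≠ ∞ := fun f n =>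
    ne_top_of_le_ne_top (ENNReal.natCast_ne_top n) (iSup_le fun s => min_le_right _ _)
  refine le_of_tendsto' (ENNReal.Tendsto.mul
    ((ENNReal.continuous_rpow_const.tendsto _).comp (hlim a ha)) (Or.inl (by simp [ha0, hp.le]))
    ((ENNReal.continuous_rpow_const.tendsto _).comp (hlim b hb)) (Or.inl (by simp [hb0, hq.le])))
    fun n => ?_
  refine prekopa_leindler_of_iSup_ne_top (ha.min measurable_const) (hb.min measurable_const) hk
    hp hq hpq (hsup a n) (hsup b n) fun s t => le_trans ?_ (h s t)
  gcongr <;> exact min_le_left _ _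

end PrekopaLeindler

theorem lintegral_mul_lintegral_le_sq {a b k : ℝ → ℝ≥0∞} (ha : Measurable a) (hb : Measurable b)
    (hk : Measurable k) (h : ∀ s t, a s * b t ≤ k ((s + t) / 2) ^ 2) :
    (∫⁻ s, a s) * ∫⁻ s, b s ≤ (∫⁻ s, k s) ^ 2 := by
  have hhalf : ∀ x y z : ℝ≥0∞, x ^ (1 / 2 : ℝ) * y ^ (1 / 2 : ℝ) ≤ z ↔ x * y ≤ z ^ 2 := by
    intro x y z
    rw [← ENNReal.mul_rpow_of_nonneg _ _ (by norm_num), one_div,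
      ENNReal.rpow_inv_le_iff two_pos, ENNReal.rpow_two]
  refine (hhalf _ _ _).1 (prekopa_leindler ha hb hk (by norm_num) (by norm_num) (by norm_num)
    fun s t => (hhalf _ _ _).2 ?_)
  simpa [mul_comm, add_div, div_eq_mul_inv, add_mul] using h s t

/-! ### Two-function inequalities -/

/-- The two-function form of a τ-property: `(∫ h dν) (∫ g dν) ≤ 1` whenever
`h x * g y ≤ K x y` and `g` vanishes outside `A`. For `K x y = exp (w (x - y))` this is the
`A`-truncated τ-property of `(ν, w)`, with `g = exp (-f)` and `h = exp (f □ w)`. -/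
def TwoFunctionBound {X : Type*} [MeasurableSpace X] (ν : Measure X) (K : X → X → ℝ≥0∞)
    (A : Set X) : Prop :=
  ∀ h g : X → ℝ≥0∞, Measurable h → Measurable g → (∀ y ∉ A, g y = 0) →
    (∀ x y, h x * g y ≤ K x y) → (∫⁻ x, h x ∂ν) * (∫⁻ y, g y ∂ν) ≤ 1

namespace TwoFunctionBound

variable {X Y : Type*} [MeasurableSpace X] [MeasurableSpace Y] {μ : Measure X} {ν : Measure Y}
  {K K' : X → X → ℝ≥0∞} {L : Y → Y → ℝ≥0∞} {A A' : Set X} {B : Set Y}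

theorem mono (hK : TwoFunctionBound μ K A) (hA : A' ⊆ A) (h : ∀ x, ∀ y ∈ A', K' x y ≤ K x y) :
    TwoFunctionBound μ K' A' := by
  intro u g hu hg hgA hug
  refine hK u g hu hg (fun y hy => hgA y fun hy' => hy (hA hy')) fun x y => ?_
  by_cases hy : y ∈ A'
  · exact (hug x y).trans (h x y hy)
  · simp [hgA y hy]

theorem lintegral_mul_lintegral_le (hK : TwoFunctionBound μ K A) {c : ℝ≥0∞} {h g : X → ℝ≥0∞}
    (hh : Measurable h) (hg : Measurable g) (hgA : ∀ y ∉ A, g y = 0)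
    (hhg : ∀ x y, h x * g y ≤ c * K x y) : (∫⁻ x, h x ∂μ) * (∫⁻ y, g y ∂μ) ≤ c := by
  refine le_of_forall_gt_imp_ge_of_dense fun c' hcc' => ?_
  rcases eq_or_ne c' ∞ with rfl | hc'
  · exact le_top
  have hc0 : c' ≠ 0 := (bot_le.trans_lt hcc').ne'
  have hscaled := hK (fun x => c'⁻¹ * h x) g (hh.const_mul _) hg hgA fun x y => by
    calc c'⁻¹ * h x * g y = c'⁻¹ * (h x * g y) := mul_assoc _ _ _
      _ ≤ c'⁻¹ * (c' * K x y) := by grw [hhg x y, hcc'.le]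
      _ = K x y := ENNReal.inv_mul_cancel_left hc0 hc'
  rwa [lintegral_const_mul _ hh, mul_assoc, mul_comm, ← div_eq_mul_inv,
    ENNReal.div_le_iff hc0 hc', one_mul] at hscaled

theorem prod [SFinite μ] [SFinite ν] (hK : TwoFunctionBound μ K A)
    (hL : TwoFunctionBound ν L B) :
    TwoFunctionBound (μ.prod ν) (fun x y => K x.1 y.1 * L x.2 y.2) (A ×ˢ B) := by
  intro h g hh hg hgA hhg
  rw [lintegral_prod _ hh.aemeasurable, lintegral_prod _ hg.aemeasurable]
  refine hK _ _ hh.lintegral_prod_right' hg.lintegral_prod_right' (fun y hy => ?_) fun x y => ?_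
  · simp [hgA (y, _) fun hyA => hy hyA.1]
  · exact hL.lintegral_mul_lintegral_le (by fun_prop) (by fun_prop)
      (fun y' hy' => hgA _ fun hyB => hy' hyB.2) fun x' y' => hhg (x, x') (y, y')

theorem pi {n : ℕ} {X : Fin n → Type*} [∀ i, MeasurableSpace (X i)] {μ : ∀ i, Measure (X i)}
    [∀ i, SigmaFinite (μ i)] {K : ∀ i, X i → X i → ℝ≥0∞} {A : ∀ i, Set (X i)}
    (hK : ∀ i, TwoFunctionBound (μ i) (K i) (A i)) :
    TwoFunctionBound (Measure.pi μ) (fun x y => ∏ i, K i (x i) (y i)) (Set.univ.pi A) := by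
  induction n with
  | zero =>
    intro h g hh hg _ hhg
    rw [Measure.pi_of_empty μ default, lintegral_dirac' _ hh, lintegral_dirac' _ hg]
    simpa using hhg default default
  | succ n ih =>
    intro h g hh hg hgA hhg
    have e := (measurePreserving_piFinSuccAbove μ 0).symm
    rw [← e.lintegral_comp hh, ← e.lintegral_comp hg]
    exact (hK 0).prod (ih fun i => hK i.succ) _ _ (hh.comp e.measurable) (hg.comp e.measurable)
      (fun y hy => hgA _ fun hyA => hy ⟨hyA 0 trivial, fun i _ => hyA i.succ trivial⟩)
      fun x y => (hhg _ _).trans_eq (Fin.prod_univ_succ _)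

theorem comap (hL : TwoFunctionBound ν L B) {T : X → Y} (hT : MeasurableEmbedding T) :
    TwoFunctionBound (ν.comap T) (fun x y => L (T x) (T y)) (T ⁻¹' B) := by
  intro h g hh hg hgB hhg
  have hle : ∀ f : X → ℝ≥0∞, ∫⁻ x, f x ∂ν.comap T ≤ ∫⁻ y, Function.extend T f 0 y ∂ν := fun f =>
    calc ∫⁻ x, f x ∂ν.comap T = ∫⁻ x, Function.extend T f 0 (T x) ∂ν.comap T := by
          simp [hT.injective.extend_apply]
      _ = ∫⁻ y in Set.range T, Function.extend T f 0 y ∂ν := by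
          rw [← hT.lintegral_map, hT.map_comap]
      _ ≤ _ := setLIntegral_le_lintegral _ _
  have hextend : ∀ (f : X → ℝ≥0∞) (y : Y), y ∉ Set.range T → Function.extend T f 0 y = 0 :=
    fun f y hy => Function.extend_apply' _ _ _ hy
  refine (mul_le_mul' (hle h) (hle g)).trans
    (hL _ _ (hT.measurable_extend hh measurable_const) (hT.measurable_extend hg measurable_const)
      (fun y hy => ?_) fun s t => ?_)
  · by_cases hyT : y ∈ Set.range T
    · obtain ⟨x, rfl⟩ := hyT
      rw [hT.injective.extend_apply, hgB x hy]
    · exact hextend g y hyT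
  · by_cases hsT : s ∈ Set.range T
    · by_cases htT : t ∈ Set.range T
      · obtain ⟨x, rfl⟩ := hsT
        obtain ⟨y, rfl⟩ := htT
        simpa only [hT.injective.extend_apply] using hhg x y
      · simp [hextend g t htT]
    · simp [hextend h s hsT]

end TwoFunctionBound

theorem twoFunctionBound_withDensity {ρ : ℝ → ℝ≥0∞} (hρ : Measurable ρ) (hρ1 : ∫⁻ s, ρ s ≤ 1) :
    TwoFunctionBound (volume.withDensity ρ) (fun s t => ρ ((s + t) / 2) ^ 2 / (ρ s * ρ t))
      Set.univ := by
  intro h g hh hg _ hhg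
  rw [lintegral_withDensity_eq_lintegral_mul _ hρ hh,
    lintegral_withDensity_eq_lintegral_mul _ hρ hg]
  refine (lintegral_mul_lintegral_le_sq (hρ.mul hh) (hρ.mul hg) hρ fun s t => ?_).trans
    (pow_le_one' hρ1 2)
  calc ρ s * h s * (ρ t * g t) = ρ s * ρ t * (h s * g t) := mul_mul_mul_comm _ _ _ _
    _ ≤ ρ s * ρ t * (ρ ((s + t) / 2) ^ 2 / (ρ s * ρ t)) := by gcongr; exact hhg s t
    _ ≤ ρ ((s + t) / 2) ^ 2 := ENNReal.mul_div_le

theorem comap_withDensity_of_hasDerivAt {σ : ℝ → ℝ≥0∞} {T T' : ℝ → ℝ}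
    (hT : MeasurableEmbedding T) (hT' : ∀ x, HasDerivAt T (T' x) x) :
    (volume.withDensity σ).comap T
      = volume.withDensity fun x => ENNReal.ofReal |T' x| * σ (T x) := by
  ext s hs
  rw [hT.comap_apply, withDensity_apply _ (hT.measurableSet_image' hs), withDensity_apply _ hs,
    lintegral_image_eq_lintegral_abs_deriv_mul hs (fun x _ => (hT' x).hasDerivWithinAt)
      hT.injective.injOn]

/-! ### From two-function inequalities to the τ-property -/

theorem measurable_eexpNeg : Measurable eexpNeg := by
  unfold eexpNeg
  exact Measurable.ite (measurableSet_singleton _) measurable_const (by fun_prop)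

theorem eexp_mono : Monotone eexp := by
  intro x y hxy
  unfold eexp
  split_ifs with hx hy hy
  · exact le_rfl
  · exact absurd (top_le_iff.1 (hx ▸ hxy)) hy
  · exact le_top
  · exact ENNReal.ofReal_le_ofReal (Real.exp_le_exp.2 (ENNReal.toReal_mono hy hxy))

theorem eexp_add_mul_eexpNeg {x : ℝ≥0∞} (hx : x ≠ ∞) {r : ℝ} (hr : 0 ≤ r) :
    eexp (x + ENNReal.ofReal r) * eexpNeg x = ENNReal.ofReal (Real.exp r) := by
  rw [eexp, eexpNeg, if_neg hx, if_neg (by simp [hx]), ← ENNReal.ofReal_mul (Real.exp_pos _).le,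
    ← Real.exp_add, ENNReal.toReal_add hx ENNReal.ofReal_ne_top, ENNReal.toReal_ofReal hr,
    add_neg_cancel_comm]

theorem TwoFunctionBound.truncatedTauProperty {n : ℕ} {ν : Measure (Fin n → ℝ)}
    {c : (Fin n → ℝ) → (Fin n → ℝ) → ℝ} {A : Set (Fin n → ℝ)} {w : (Fin n → ℝ) → ℝ}
    (h : TwoFunctionBound ν (fun x y => ENNReal.ofReal (Real.exp (c x y))) A)
    (hc : ∀ x y, 0 ≤ c x y) (hw : ∀ x, ∀ y ∈ A, w (x - y) ≤ c x y) :
    TruncatedTauProperty ν w A := by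
  intro f hf hfA
  -- `f □ w` need not be measurable, so `exp (f □ w)` is first replaced by a measurable minorant.
  obtain ⟨φ, hφ, hφ_le, hφ_eq⟩ :=
    exists_measurable_le_lintegral_eq ν fun x => eexp (infConv f w x)
  rw [hφ_eq]
  refine h φ _ hφ (measurable_eexpNeg.comp hf) (fun y hy => ?_) fun x y => ?_
  · simp [eexpNeg, hfA y hy]
  by_cases hy : f y = ∞
  · simp [eexpNeg, hy]
  have hyA : y ∈ A := not_imp_comm.1 (hfA y) hy
  refine le_of_le_of_eq ?_ (eexp_add_mul_eexpNeg hy (hc x y))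
  gcongr
  refine (hφ_le x).trans (eexp_mono ((iInf_le _ y).trans ?_))
  gcongr
  exact hw x y hyA

theorem truncatedTauProperty_pi {n : ℕ} {ν : Fin n → Measure ℝ} [∀ i, SigmaFinite (ν i)]
    {c : Fin n → ℝ → ℝ → ℝ} {A : Fin n → Set ℝ} {w : Fin n → ℝ → ℝ}
    (h : ∀ i, TwoFunctionBound (ν i) (fun x y => ENNReal.ofReal (Real.exp (c i x y))) (A i))
    (hc : ∀ i x y, 0 ≤ c i x y) (hw : ∀ i x, ∀ y ∈ A i, w i (x - y) ≤ c i x y) :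
    TruncatedTauProperty (Measure.pi ν) (fun x => ∑ i, w i (x i)) (Set.univ.pi A) := by
  refine ((TwoFunctionBound.pi h).mono subset_rfl fun x y _ => le_of_eq ?_).truncatedTauProperty
    (c := fun x y => ∑ i, c i (x i) (y i)) (fun _ _ => Finset.sum_nonneg fun i _ => hc i _ _)
    fun x _ hy => Finset.sum_le_sum fun i _ => hw i (x i) _ (hy i trivial)
  rw [Real.exp_sum, ENNReal.ofReal_prod_of_nonneg fun _ _ => (Real.exp_pos _).le]

/-! ### The measures `ν_α` -/

theorem integrable_exp_neg_abs_rpow {α : ℝ} (hα : 0 < α) :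
    Integrable fun x : ℝ => Real.exp (-|x| ^ α) := by
  refine Integrable.of_integral_ne_zero ?_
  rw [integral_comp_abs (f := fun x => Real.exp (-x ^ α)), integral_exp_neg_rpow hα]
  have := Real.Gamma_pos_of_pos (s := 1 / α + 1) (by positivity)
  positivity

/-- The mass that `nuKernel α` gives to `(x, ∞)`. -/
def tailMass (α x : ℝ) : ℝ := ∫ t in Set.Ioi x, Real.exp (-|t| ^ α)

theorem tailMass_zero {α : ℝ} (hα : 0 < α) : tailMass α 0 = Real.Gamma (1 / α + 1) := by
  rw [← integral_exp_neg_rpow hα]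
  refine setIntegral_congr_fun measurableSet_Ioi fun x hx => ?_
  simp [abs_of_pos (Set.mem_Ioi.1 hx)]

theorem tailMass_pos {α : ℝ} (hα : 0 < α) (x : ℝ) : 0 < tailMass α x := by
  rw [tailMass, integral_pos_iff_support_of_nonneg (fun t => (Real.exp_pos _).le)
    (integrable_exp_neg_abs_rpow hα).integrableOn]
  have : (Function.support fun t : ℝ => Real.exp (-|t| ^ α)) = Set.univ :=
    Set.eq_univ_of_forall fun t => (Real.exp_pos _).ne'
  simp [this]

theorem nuKernel_univ {α : ℝ} (hα : 0 < α) :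
    nuKernel α Set.univ = ENNReal.ofReal (2 * tailMass α 0) := by
  rw [nuKernel, withDensity_apply _ MeasurableSet.univ, Measure.restrict_univ,
    ← ofReal_integral_eq_lintegral_ofReal (integrable_exp_neg_abs_rpow hα)
      (ae_of_all _ fun x => (Real.exp_pos _).le),
    integral_comp_abs (f := fun x => Real.exp (-x ^ α)), integral_exp_neg_rpow hα,
    tailMass_zero hα]

theorem isProbabilityMeasure_nuAlpha {α : ℝ} (hα : 0 < α) : IsProbabilityMeasure (nuAlpha α) := by
  constructor
  have := tailMass_pos hα 0
  rw [nuAlpha, Measure.smul_apply, nuKernel_univ hα, smul_eq_mul]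
  exact ENNReal.inv_mul_cancel (by simpa using this) ENNReal.ofReal_ne_top

theorem nuAlpha_eq_withDensity {α : ℝ} (hα : 0 < α) :
    nuAlpha α = volume.withDensity fun x =>
      ENNReal.ofReal (Real.exp (-|x| ^ α) / (2 * tailMass α 0)) := by
  have := tailMass_pos hα 0
  rw [nuAlpha, nuKernel_univ hα, nuKernel, ← withDensity_smul _ (by fun_prop)]
  congr 1
  ext x
  rw [Pi.smul_apply, smul_eq_mul, ENNReal.ofReal_div_of_pos (by positivity), mul_comm]
  rfl

theorem nuAlpha_one_eq_withDensity :
    nuAlpha 1 = volume.withDensity fun x => ENNReal.ofReal (Real.exp (-|x|) / 2) := by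
  norm_num [nuAlpha_eq_withDensity one_pos, tailMass_zero one_pos]

/-! ### Odd extensions -/

/-- The odd extension to `ℝ` of a function on the half-line `[0, ∞)` which vanishes at `0`. -/
def oddExt (A : ℝ → ℝ) (x : ℝ) : ℝ := if 0 ≤ x then A x else -A (-x)

theorem oddExt_of_nonneg (A : ℝ → ℝ) {x : ℝ} (hx : 0 ≤ x) : oddExt A x = A x := if_pos hx

theorem oddExt_of_nonpos {A : ℝ → ℝ} (hA0 : A 0 = 0) {x : ℝ} (hx : x ≤ 0) :
    oddExt A x = -A (-x) := by
  rcases hx.lt_or_eq with hx | rfl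
  · exact if_neg (not_le.2 hx)
  · simp [oddExt, hA0]

theorem oddExt_neg {A : ℝ → ℝ} (hA0 : A 0 = 0) (x : ℝ) : oddExt A (-x) = -oddExt A x := by
  rcases le_total 0 x with hx | hx
  · rw [oddExt_of_nonneg A hx, oddExt_of_nonpos hA0 (by linarith), neg_neg]
  · rw [oddExt_of_nonpos hA0 hx, oddExt_of_nonneg A (by linarith), neg_neg]

theorem abs_oddExt {A : ℝ → ℝ} (hA : ∀ x, 0 ≤ x → 0 ≤ A x) (x : ℝ) :
    |oddExt A x| = A |x| := by
  unfold oddExt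
  split_ifs with hx
  · rw [abs_of_nonneg hx, abs_of_nonneg (hA x hx)]
  · rw [abs_neg, abs_of_neg (not_le.1 hx), abs_of_nonneg (hA _ (by linarith))]

theorem hasDerivAt_oddExt {A A' : ℝ → ℝ} (hA : ∀ x, 0 ≤ x → HasDerivAt A (A' x) x)
    (hA0 : A 0 = 0) (x : ℝ) : HasDerivAt (oddExt A) (A' |x|) x := by
  have hneg : ∀ x ≤ 0, HasDerivAt (fun y => -A (-y)) (A' |x|) x := by
    intro x hx
    rw [abs_of_nonpos hx]
    exact ((hA (-x) (by linarith)).comp x (hasDerivAt_neg x)).neg.congr_deriv (by simp)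
  rcases lt_trichotomy x 0 with hx | rfl | hx
  · exact (hneg x hx.le).congr_of_eventuallyEq <| (eventually_lt_nhds hx).mono fun y hy =>
      oddExt_of_nonpos hA0 (le_of_lt hy)
  · have hright : HasDerivWithinAt (oddExt A) (A' |0|) (Set.Ici 0) 0 := by
      rw [abs_zero]
      exact (hA 0 le_rfl).hasDerivWithinAt.congr (fun y hy => oddExt_of_nonneg A hy)
        (oddExt_of_nonneg A le_rfl)
    have hleft : HasDerivWithinAt (oddExt A) (A' |0|) (Set.Iic 0) 0 :=
      (hneg 0 le_rfl).hasDerivWithinAt.congr (fun y hy => oddExt_of_nonpos hA0 hy)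
        (oddExt_of_nonpos hA0 le_rfl)
    simpa [Set.Ici_union_Iic] using hright.union hleft
  · rw [abs_of_pos hx]
    exact (hA x hx.le).congr_of_eventuallyEq <| (eventually_gt_nhds hx).mono fun y hy =>
      oddExt_of_nonneg A (le_of_lt hy)

/-! ### The exponential law -/

/-- The odd function equal to `1 - exp (-u)` for `u ≥ 0`; it maps `ℝ` onto `(-1, 1)`. -/
def expCoord : ℝ → ℝ := oddExt fun u => 1 - Real.exp (-u)

theorem expCoord_of_nonneg {u : ℝ} (hu : 0 ≤ u) : expCoord u = 1 - Real.exp (-u) :=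
  oddExt_of_nonneg _ hu

theorem expCoord_of_nonpos {u : ℝ} (hu : u ≤ 0) : expCoord u = Real.exp u - 1 := by
  rw [expCoord, oddExt_of_nonpos (by simp) hu, neg_neg, neg_sub]

theorem expCoord_neg (u : ℝ) : expCoord (-u) = -expCoord u := oddExt_neg (by simp) u

theorem abs_expCoord (u : ℝ) : |expCoord u| = 1 - Real.exp (-|u|) :=
  abs_oddExt (fun x hx => by simpa using hx) u

theorem hasDerivAt_expCoord (u : ℝ) : HasDerivAt expCoord (Real.exp (-|u|)) u := by
  refine hasDerivAt_oddExt (A' := fun u => Real.exp (-u)) (fun x _ => ?_) (by simp) u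
  simpa using ((hasDerivAt_neg x).exp).const_sub 1

theorem strictMono_expCoord : StrictMono expCoord :=
  strictMono_of_deriv_pos fun x => by
    rw [(hasDerivAt_expCoord x).deriv]
    positivity

theorem cosh_le_exp_mul_of_add_nonneg {u v : ℝ} (h : 0 ≤ u + v) :
    Real.cosh ((u - v) / 2)
      ≤ Real.exp ((|u| + |v|) / 2) * (1 - |expCoord u + expCoord v| / 2) := by
  wlog huv : v ≤ u generalizing u v
  · have := this (u := v) (v := u) (by linarith) (by linarith)
    rwa [← Real.cosh_neg, ← neg_div, neg_sub, add_comm |u|, add_comm (expCoord u)]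
  have hu : 0 ≤ u := by linarith
  rw [abs_of_nonneg hu, expCoord_of_nonneg hu, Real.cosh_eq]
  rcases le_or_gt 0 v with hv | hv
  · have hu1 : Real.exp (-u) ≤ 1 := Real.exp_le_one_iff.2 (by linarith)
    have hv1 : Real.exp (-v) ≤ 1 := Real.exp_le_one_iff.2 (by linarith)
    rw [abs_of_nonneg hv, expCoord_of_nonneg hv, abs_of_nonneg (by linarith),
      show (u - v) / 2 = (u + v) / 2 + -v by ring,
      show -((u + v) / 2 + -v) = (u + v) / 2 + -u by ring, Real.exp_add, Real.exp_add]
    exact le_of_eq (by ring)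
  · have huv1 : Real.exp (-u) ≤ Real.exp v := Real.exp_le_exp.2 (by linarith)
    have hv1 : Real.exp v ≤ 1 := Real.exp_le_one_iff.2 hv.le
    rw [abs_of_neg hv, expCoord_of_nonpos hv.le, abs_of_nonneg (by linarith),
      show -((u - v) / 2) = (u + -v) / 2 + (-u + v) by ring, ← sub_eq_add_neg u, Real.exp_add,
      Real.exp_add]
    -- After division by `exp ((u - v) / 2)` this is `0 ≤ (1 - exp v) * (1 + exp (-u))`.
    have := mul_nonneg (Real.exp_pos ((u - v) / 2)).le
      (mul_nonneg (sub_nonneg.2 hv1) (add_pos one_pos (Real.exp_pos (-u))).le)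
    linarith

theorem cosh_le_exp_mul (u v : ℝ) :
    Real.cosh ((u - v) / 2)
      ≤ Real.exp ((|u| + |v|) / 2) * (1 - |expCoord u + expCoord v| / 2) := by
  rcases le_total 0 (u + v) with h | h
  · exact cosh_le_exp_mul_of_add_nonneg h
  · have := cosh_le_exp_mul_of_add_nonneg (u := -u) (v := -v) (by linarith)
    rwa [show (-u - -v) / 2 = -((u - v) / 2) by ring, Real.cosh_neg, abs_neg, abs_neg,
      expCoord_neg, expCoord_neg, ← neg_add, abs_neg] at this

/-- The even convex weight `(2 (1 - l) / l) log cosh (l t / 2)`: it is quadratic near `0` and has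
slope `1 - l` at infinity. -/
def logCoshWeight (l t : ℝ) : ℝ := 2 * ((1 - l) / l) * Real.log (Real.cosh (l * t / 2))

theorem exp_logCoshWeight (l t : ℝ) :
    Real.exp (logCoshWeight l t) = (Real.cosh (l * t / 2) ^ ((1 - l) / l)) ^ 2 := by
  rw [Real.rpow_def_of_pos (Real.cosh_pos _), ← Real.exp_nat_mul, logCoshWeight]
  congr 1
  push_cast
  ring

/-- The symmetric beta density on `(-1, 1)` with exponent `c`. -/
def betaDensity (c s : ℝ) : ℝ := (c + 1) / 2 * (max 0 (1 - |s|)) ^ c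

theorem betaDensity_nonneg {c : ℝ} (hc : 0 ≤ c) (s : ℝ) : 0 ≤ betaDensity c s := by
  unfold betaDensity
  positivity

theorem integral_Ioi_max_one_sub_rpow {c : ℝ} (hc : 0 < c) :
    ∫ s in Set.Ioi (0 : ℝ), (max 0 (1 - s)) ^ c = 1 / (c + 1) :=
  calc ∫ s in Set.Ioi (0 : ℝ), (max 0 (1 - s)) ^ c
      = ∫ s in (0 : ℝ)..1, (max 0 (1 - s)) ^ c := by
        rw [intervalIntegral.integral_of_le zero_le_one]
        refine setIntegral_eq_of_subset_of_forall_sdiff_eq_zero measurableSet_Ioi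
          Set.Ioc_subset_Ioi_self fun s hs => ?_
        have hs1 : 1 ≤ s := le_of_not_ge fun h => hs.2 ⟨hs.1, h⟩
        rw [max_eq_left (by linarith), Real.zero_rpow hc.ne']
    _ = ∫ s in (0 : ℝ)..1, s ^ c := by
        rw [intervalIntegral.integral_comp_sub_left (fun y => (max 0 y) ^ c), sub_self, sub_zero]
        refine intervalIntegral.integral_congr fun s hs => ?_
        rw [Set.uIcc_of_le zero_le_one] at hs
        simp only [max_eq_right hs.1]
    _ = 1 / (c + 1) := by
        rw [integral_rpow (Or.inl (by linarith)), Real.one_rpow, Real.zero_rpow (by positivity),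
          sub_zero]

theorem integral_betaDensity {c : ℝ} (hc : 0 < c) : ∫ s, betaDensity c s = 1 := by
  unfold betaDensity
  rw [integral_const_mul, integral_comp_abs (f := fun s => (max 0 (1 - s)) ^ c),
    integral_Ioi_max_one_sub_rpow hc]
  field_simp

theorem lintegral_betaDensity {c : ℝ} (hc : 0 < c) :
    ∫⁻ s, ENNReal.ofReal (betaDensity c s) = 1 := by
  rw [← ofReal_integral_eq_lintegral_ofReal
    (.of_integral_ne_zero (by rw [integral_betaDensity hc]; exact one_ne_zero))
    (ae_of_all _ (betaDensity_nonneg hc.le)), integral_betaDensity hc, ENNReal.ofReal_one]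

theorem betaDensity_expCoord (c u : ℝ) :
    betaDensity c (expCoord u) = (c + 1) / 2 * Real.exp (-(c * |u|)) := by
  rw [betaDensity, abs_expCoord, sub_sub_cancel, max_eq_right (Real.exp_pos _).le, ← Real.exp_mul,
    neg_mul, mul_comm |u|]

theorem cosh_rpow_mul_betaDensity_le {c : ℝ} (hc : 0 ≤ c) (u v : ℝ) :
    (Real.cosh ((u - v) / 2) ^ c) ^ 2 * (betaDensity c (expCoord u) * betaDensity c (expCoord v))
      ≤ betaDensity c ((expCoord u + expCoord v) / 2) ^ 2 := by
  have hcosh : Real.cosh ((u - v) / 2) * Real.exp (-((|u| + |v|) / 2))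
      ≤ max 0 (1 - |(expCoord u + expCoord v) / 2|) := by
    refine le_max_of_le_right ?_
    rw [Real.exp_neg, ← div_eq_mul_inv, div_le_iff₀' (Real.exp_pos _), abs_div, abs_two]
    exact cosh_le_exp_mul u v
  calc _ = ((c + 1) / 2 * (Real.cosh ((u - v) / 2) * Real.exp (-((|u| + |v|) / 2))) ^ c) ^ 2 := by
        have hexp : Real.exp (-(c * |u|)) * Real.exp (-(c * |v|))
            = (Real.exp (-((|u| + |v|) / 2)) ^ c) ^ 2 := by
          rw [← Real.exp_add, ← Real.exp_mul, ← Real.exp_nat_mul]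
          congr 1
          push_cast
          ring
        rw [betaDensity_expCoord, betaDensity_expCoord, Real.mul_rpow (Real.cosh_pos _).le
          (Real.exp_pos _).le, mul_pow, mul_pow, ← hexp]
        ring
    _ ≤ _ := by unfold betaDensity; gcongr

theorem strictMono_expCoord_const_mul {l : ℝ} (hl : 0 < l) :
    StrictMono fun u => expCoord (l * u) :=
  strictMono_expCoord.comp (strictMono_mul_left_of_pos hl)

theorem measurableEmbedding_of_strictMono {f : ℝ → ℝ} (hf : StrictMono f) :
    MeasurableEmbedding f :=
  hf.monotone.measurable.measurableEmbedding hf.injective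

theorem nuAlpha_one_eq_comap_expCoord {l : ℝ} (hl : 0 < l) :
    nuAlpha 1 = (volume.withDensity fun s => ENNReal.ofReal (betaDensity ((1 - l) / l) s)).comap
      fun u => expCoord (l * u) := by
  have hderiv (u : ℝ) :
      HasDerivAt (fun u => expCoord (l * u)) (Real.exp (-|l * u|) * l) u := by
    exact (hasDerivAt_expCoord (l * u)).comp u (hasDerivAt_const_mul l)
  rw [comap_withDensity_of_hasDerivAt
    (measurableEmbedding_of_strictMono (strictMono_expCoord_const_mul hl)) hderiv,
    nuAlpha_one_eq_withDensity]
  congr 1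
  ext u : 1
  rw [betaDensity_expCoord, ← ENNReal.ofReal_mul (abs_nonneg _),
    abs_of_pos (mul_pos (Real.exp_pos _) hl)]
  congr 1
  rw [show -|u| = -|l * u| + -((1 - l) / l * |l * u|) by
    rw [abs_mul, abs_of_pos hl]; field_simp; ring, Real.exp_add]
  field_simp
  ring

theorem twoFunctionBound_nuAlpha_one {l : ℝ} (hl : 0 < l) (hl1 : l < 1) :
    TwoFunctionBound (nuAlpha 1) (fun u v => ENNReal.ofReal (Real.exp (logCoshWeight l (u - v))))
      Set.univ := by
  have hc : 0 < (1 - l) / l := div_pos (sub_pos.2 hl1) hl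
  have hβ : Measurable fun s => ENNReal.ofReal (betaDensity ((1 - l) / l) s) := by
    unfold betaDensity
    fun_prop
  have hβ0 (u : ℝ) : ENNReal.ofReal (betaDensity ((1 - l) / l) (expCoord u)) ≠ 0 := by
    rw [betaDensity_expCoord, ENNReal.ofReal_ne_zero_iff]
    positivity
  rw [nuAlpha_one_eq_comap_expCoord hl]
  refine ((twoFunctionBound_withDensity hβ (lintegral_betaDensity hc).le).comap
    (measurableEmbedding_of_strictMono (strictMono_expCoord_const_mul hl))).mono
    (Set.subset_univ _) fun u v _ => ?_
  rw [ENNReal.le_div_iff_mul_le (Or.inl (mul_ne_zero (hβ0 _) (hβ0 _)))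
    (Or.inl (ENNReal.mul_ne_top ENNReal.ofReal_ne_top ENNReal.ofReal_ne_top)),
    ← ENNReal.ofReal_mul (betaDensity_nonneg hc.le _), ← ENNReal.ofReal_mul (Real.exp_pos _).le,
    ← ENNReal.ofReal_pow (betaDensity_nonneg hc.le _), exp_logCoshWeight, mul_sub]
  exact ENNReal.ofReal_le_ofReal (cosh_rpow_mul_betaDensity_le hc.le _ _)

/-! ### Transport to the exponential law -/

section Transport

variable {α : ℝ}

theorem hasDerivAt_tailMass (hα : 0 < α) (x : ℝ) :
    HasDerivAt (tailMass α) (-Real.exp (-|x| ^ α)) x := by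
  have hint := integrable_exp_neg_abs_rpow hα
  have hcont : Continuous fun x : ℝ => Real.exp (-|x| ^ α) :=
    Real.continuous_exp.comp (continuous_abs.rpow_const fun _ => Or.inr hα.le).neg
  have h : tailMass α = fun x => tailMass α 0 - ∫ t in (0 : ℝ)..x, Real.exp (-|t| ^ α) := by
    ext y
    rw [eq_sub_iff_add_eq, add_comm]
    exact intervalIntegral.integral_interval_add_Ioi hint.integrableOn hint.integrableOn
  rw [h]
  exact (hcont.integral_hasStrictDerivAt 0 x).hasDerivAt.const_sub _

theorem antitone_tailMass (hα : 0 < α) : Antitone (tailMass α) := fun _ _ hxy =>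
  setIntegral_mono_set (integrable_exp_neg_abs_rpow hα).integrableOn
    (ae_of_all _ fun _ => (Real.exp_pos _).le) (Set.Ioi_subset_Ioi hxy).eventuallyLE

theorem tailMass_le (hα : 0 < α) {δ x : ℝ} (hδ : 0 < δ) (hδ1 : δ ≤ 1) (hx : 0 ≤ x) :
    tailMass α x ≤ Real.exp (-(1 - δ) * x ^ α) * (δ ^ (-1 / α) * tailMass α 0) := by
  rw [tailMass_zero hα, ← integral_exp_neg_mul_rpow hα hδ, ← integral_const_mul]
  have hint : IntegrableOn (fun t : ℝ => Real.exp (-(1 - δ) * x ^ α) * Real.exp (-δ * t ^ α))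
      (Set.Ioi 0) := by
    refine (Integrable.of_integral_ne_zero ?_).const_mul _
    rw [integral_exp_neg_mul_rpow hα hδ]
    have := Real.Gamma_pos_of_pos (s := 1 / α + 1) (by positivity)
    positivity
  refine le_trans (setIntegral_mono_on (integrable_exp_neg_abs_rpow hα).integrableOn
    (hint.mono_set (Set.Ioi_subset_Ioi hx)) measurableSet_Ioi fun t ht => ?_)
    (setIntegral_mono_set hint (ae_of_all _ fun t => by positivity)
      (Set.Ioi_subset_Ioi hx).eventuallyLE)
  rw [Set.mem_Ioi] at ht
  rw [← Real.exp_add, Real.exp_le_exp, abs_of_pos (hx.trans_lt ht)]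
  have := mul_le_mul_of_nonneg_left (Real.rpow_le_rpow hx ht.le hα.le) (sub_nonneg.2 hδ1)
  linarith

theorem mul_exp_le_tailMass (hα : 0 < α) {x : ℝ} (hx : 0 ≤ x) :
    x * Real.exp (-(2 * x) ^ α) ≤ tailMass α x := by
  have hint := integrable_exp_neg_abs_rpow hα
  calc x * Real.exp (-(2 * x) ^ α) = ∫ _ in Set.Ioc x (2 * x), Real.exp (-(2 * x) ^ α) := by
        rw [setIntegral_const, smul_eq_mul, Measure.real, Real.volume_Ioc,
          ENNReal.toReal_ofReal (by linarith)]
        ring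
    _ ≤ ∫ t in Set.Ioc x (2 * x), Real.exp (-|t| ^ α) := by
        refine setIntegral_mono_on (integrableOn_const (by simp)) hint.integrableOn
          measurableSet_Ioc fun t ht => ?_
        rw [abs_of_nonneg (hx.trans ht.1.le)]
        gcongr
        · exact hx.trans ht.1.le
        · exact ht.2
    _ ≤ _ := setIntegral_mono_set hint.integrableOn (ae_of_all _ fun t => (Real.exp_pos _).le)
        Set.Ioc_subset_Ioi_self.eventuallyLE

/-- `exp (-logTail α x)` is the `nuAlpha α`-probability of `(x, ∞)` relative to that of
`(0, ∞)`. -/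
def logTail (α x : ℝ) : ℝ := Real.log (tailMass α 0) - Real.log (tailMass α x)

theorem logTail_zero : logTail α 0 = 0 := sub_self _

theorem exp_neg_logTail (hα : 0 < α) (x : ℝ) :
    Real.exp (-logTail α x) = tailMass α x / tailMass α 0 := by
  rw [logTail, neg_sub, Real.exp_sub, Real.exp_log (tailMass_pos hα x),
    Real.exp_log (tailMass_pos hα 0)]

theorem hasDerivAt_logTail (hα : 0 < α) (x : ℝ) :
    HasDerivAt (logTail α) (Real.exp (-|x| ^ α) / tailMass α x) x := by
  refine (((hasDerivAt_tailMass hα x).log (tailMass_pos hα x).ne').const_sub _).congr_deriv ?_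
  rw [neg_div, neg_neg]

theorem monotone_logTail (hα : 0 < α) : Monotone (logTail α) := fun _ y hxy =>
  sub_le_sub_left (Real.log_le_log (tailMass_pos hα y) (antitone_tailMass hα hxy)) _

theorem logTail_nonneg (hα : 0 < α) {x : ℝ} (hx : 0 ≤ x) : 0 ≤ logTail α x :=
  logTail_zero.symm.trans_le (monotone_logTail hα hx)

theorem le_logTail (hα : 0 < α) {δ x : ℝ} (hδ : 0 < δ) (hδ1 : δ ≤ 1) (hx : 0 ≤ x) :
    (1 - δ) * x ^ α + Real.log δ / α ≤ logTail α x := by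
  have hN := tailMass_pos hα 0
  have h := Real.log_le_log (tailMass_pos hα x) (tailMass_le hα hδ hδ1 hx)
  rw [Real.log_mul (by positivity) (by positivity), Real.log_mul (by positivity) hN.ne',
    Real.log_exp, Real.log_rpow hδ, neg_div α, neg_mul (1 / α), one_div_mul_eq_div] at h
  rw [logTail]
  linarith

theorem logTail_le (hα : 0 < α) {x : ℝ} (hx : 1 ≤ x) :
    logTail α x ≤ (2 ^ α + |Real.log (tailMass α 0)|) * x ^ α := by
  have h := Real.log_le_log (by positivity) (mul_exp_le_tailMass hα (by linarith : 0 ≤ x))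
  rw [Real.log_mul (by positivity) (by positivity), Real.log_exp,
    Real.mul_rpow zero_le_two (by linarith)] at h
  have hlog := Real.log_nonneg hx
  have habs : |Real.log (tailMass α 0)| ≤ |Real.log (tailMass α 0)| * x ^ α :=
    le_mul_of_one_le_right (abs_nonneg _) (Real.one_le_rpow hx hα.le)
  rw [logTail]
  linarith [le_abs_self (Real.log (tailMass α 0))]

/-- The increasing map which carries `nuAlpha α` to the symmetric exponential law. -/
def transport (α : ℝ) : ℝ → ℝ := oddExt (logTail α)

theorem abs_transport (hα : 0 < α) (x : ℝ) : |transport α x| = logTail α |x| :=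
  abs_oddExt (fun _ => logTail_nonneg hα) x

theorem hasDerivAt_transport (hα : 0 < α) (x : ℝ) :
    HasDerivAt (transport α) (Real.exp (-|x| ^ α) / tailMass α |x|) x := by
  have := hasDerivAt_oddExt (fun x _ => hasDerivAt_logTail hα x) logTail_zero x
  rwa [abs_abs] at this

theorem strictMono_transport (hα : 0 < α) : StrictMono (transport α) :=
  strictMono_of_deriv_pos fun x => by
    rw [(hasDerivAt_transport hα x).deriv]
    exact div_pos (Real.exp_pos _) (tailMass_pos hα _)

theorem nuAlpha_eq_comap_transport (hα : 0 < α) :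
    nuAlpha α = (nuAlpha 1).comap (transport α) := by
  rw [nuAlpha_one_eq_withDensity, comap_withDensity_of_hasDerivAt
    (measurableEmbedding_of_strictMono (strictMono_transport hα)) (hasDerivAt_transport hα),
    nuAlpha_eq_withDensity hα]
  congr 1
  ext x : 1
  have hx := tailMass_pos hα |x|
  rw [abs_transport hα, exp_neg_logTail hα, ← ENNReal.ofReal_mul (abs_nonneg _),
    abs_of_pos (div_pos (Real.exp_pos _) hx)]
  congr 1
  field_simp

theorem twoFunctionBound_nuAlpha (hα : 0 < α) {l : ℝ} (hl : 0 < l) (hl1 : l < 1) :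
    TwoFunctionBound (nuAlpha α)
      (fun x y => ENNReal.ofReal (Real.exp (logCoshWeight l (transport α x - transport α y))))
      Set.univ := by
  rw [nuAlpha_eq_comap_transport hα]
  exact (twoFunctionBound_nuAlpha_one hl hl1).comap
    (measurableEmbedding_of_strictMono (strictMono_transport hα))

theorem le_abs_transport_sub (hα : 0 < α) {δ m x y : ℝ} (hδ : 0 < δ) (hδ1 : δ ≤ 1) (hm : 1 ≤ m)
    (hy : |y| ≤ m) :
    (1 - δ) * |x| ^ α + Real.log δ / α - (2 ^ α + |Real.log (tailMass α 0)|) * m ^ α ≤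
      |transport α x - transport α y| := by
  refine le_trans ?_ (abs_sub_abs_le_abs_sub _ _)
  rw [abs_transport hα, abs_transport hα]
  linarith [le_logTail hα hδ hδ1 (abs_nonneg x), logTail_le hα hm, monotone_logTail hα hy]

theorem le_deriv_transport (hα : 0 < α) {δ : ℝ} (hδ : 0 < δ) (hδ1 : δ ≤ 1) (x : ℝ) :
    δ ^ (1 / α) * Real.exp (-δ * |x| ^ α) / tailMass α 0 ≤ deriv (transport α) x := by
  have hN := tailMass_pos hα 0
  rw [(hasDerivAt_transport hα x).deriv, le_div_iff₀ (tailMass_pos hα |x|)]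
  calc _ ≤ δ ^ (1 / α) * Real.exp (-δ * |x| ^ α) / tailMass α 0 *
        (Real.exp (-(1 - δ) * |x| ^ α) * (δ ^ (-1 / α) * tailMass α 0)) := by
        gcongr
        exact tailMass_le hα hδ hδ1 (abs_nonneg x)
    _ = Real.exp (-δ * |x| ^ α) * Real.exp (-(1 - δ) * |x| ^ α) := by
        rw [neg_div, Real.rpow_neg hδ.le]
        field_simp
    _ = Real.exp (-|x| ^ α) := by
        rw [← Real.exp_add]
        ring_nf

theorem mul_abs_sub_le_abs_transport_sub (hα : 0 < α) {δ r x y : ℝ} (hδ : 0 < δ) (hδ1 : δ ≤ 1)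
    (hx : |x| ≤ r) (hy : |y| ≤ r) :
    δ ^ (1 / α) * Real.exp (-δ * r ^ α) / tailMass α 0 * |x - y| ≤
      |transport α x - transport α y| := by
  wlog hxy : y ≤ x generalizing x y
  · rw [abs_sub_comm x, abs_sub_comm (transport α x)]
    exact this hy hx (le_of_not_ge hxy)
  refine le_trans ?_ (le_abs_self _)
  rw [abs_of_nonneg (sub_nonneg.2 hxy)]
  have hdiff : Differentiable ℝ (transport α) := fun z =>
    (hasDerivAt_transport hα z).differentiableAt
  refine (convex_Icc (-r) r).mul_sub_le_image_sub_of_le_deriv hdiff.continuous.continuousOn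
    hdiff.differentiableOn (fun z hz => ?_) y (abs_le.1 hy) x (abs_le.1 hx) hxy
  refine le_trans ?_ (le_deriv_transport hα hδ hδ1 z)
  have hz : |z| ^ α ≤ r ^ α :=
    Real.rpow_le_rpow (abs_nonneg z) (abs_le.2 (Set.mem_Icc.1 (interior_subset hz))) hα.le
  have hN := tailMass_pos hα 0
  gcongr δ ^ (1 / α) * Real.exp ?_ / _
  nlinarith

end Transport

/-! ### Comparison of the weights -/

theorem abs_sub_log_two_le_log_cosh (s : ℝ) : |s| - Real.log 2 ≤ Real.log (Real.cosh s) := by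
  rw [← Real.log_exp |s|, ← Real.log_div (Real.exp_pos _).ne' two_ne_zero, ← Real.cosh_abs,
    Real.cosh_eq]
  gcongr
  exact le_add_of_nonneg_right (Real.exp_pos _).le

theorem one_add_sq_div_two_le_cosh (s : ℝ) : 1 + s ^ 2 / 2 ≤ Real.cosh s := by
  have h : (s / 2) ^ 2 ≤ Real.sinh (s / 2) ^ 2 := by
    rw [sq_le_sq, Real.abs_sinh]
    exact Real.self_le_sinh_iff.2 (abs_nonneg _)
  have h2 := Real.cosh_two_mul (s / 2)
  rw [mul_div_cancel₀ s two_ne_zero, Real.cosh_sq] at h2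
  linarith

theorem sq_div_le_log_cosh (s : ℝ) : s ^ 2 / 2 / (1 + s ^ 2 / 2) ≤ Real.log (Real.cosh s) :=
  calc s ^ 2 / 2 / (1 + s ^ 2 / 2) = 1 - (1 + s ^ 2 / 2)⁻¹ := by field_simp; ring
    _ ≤ 1 - (Real.cosh s)⁻¹ := by gcongr; exact one_add_sq_div_two_le_cosh s
    _ ≤ _ := Real.one_sub_inv_le_log_of_pos (Real.cosh_pos s)

section LogCoshWeight

variable {l : ℝ}

theorem logCoshWeight_coeff_nonneg (hl : 0 < l) (hl1 : l ≤ 1) : 0 ≤ 2 * ((1 - l) / l) :=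
  mul_nonneg zero_le_two (div_nonneg (sub_nonneg.2 hl1) hl.le)

theorem logCoshWeight_nonneg (hl : 0 < l) (hl1 : l ≤ 1) (t : ℝ) : 0 ≤ logCoshWeight l t :=
  mul_nonneg (logCoshWeight_coeff_nonneg hl hl1) (Real.log_nonneg (Real.one_le_cosh _))

theorem logCoshWeight_le_of_abs_le {s t : ℝ} (hl : 0 < l) (hl1 : l ≤ 1) (h : |s| ≤ |t|) :
    logCoshWeight l s ≤ logCoshWeight l t := by
  refine mul_le_mul_of_nonneg_left (Real.log_le_log (Real.cosh_pos _) (Real.cosh_le_cosh.2 ?_))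
    (logCoshWeight_coeff_nonneg hl hl1)
  rw [abs_div, abs_div, abs_mul, abs_mul]
  gcongr

theorem linear_le_logCoshWeight (hl : 0 < l) (hl1 : l ≤ 1) (t : ℝ) :
    (1 - l) * (|t| - 2 / l) ≤ logCoshWeight l t := by
  have h := abs_sub_log_two_le_log_cosh (l * t / 2)
  rw [abs_div, abs_mul, abs_of_pos hl, abs_two] at h
  calc (1 - l) * (|t| - 2 / l) = 2 * ((1 - l) / l) * (l * |t| / 2 - 1) := by field_simp
    _ ≤ 2 * ((1 - l) / l) * Real.log (Real.cosh (l * t / 2)) :=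
      mul_le_mul_of_nonneg_left (by linarith [Real.log_two_lt_d9])
        (logCoshWeight_coeff_nonneg hl hl1)

theorem quadratic_le_logCoshWeight (hl : 0 < l) (hl1 : l ≤ 1 / 2) (t : ℝ) :
    l * t ^ 2 / (8 * (1 + (l * t / 2) ^ 2 / 2)) ≤ logCoshWeight l t := by
  have hcoeff : 1 / l ≤ 2 * ((1 - l) / l) := by
    rw [← mul_div_assoc]
    gcongr
    linarith
  calc _ = 1 / l * ((l * t / 2) ^ 2 / 2 / (1 + (l * t / 2) ^ 2 / 2)) := by field_simp; ring
    _ ≤ 2 * ((1 - l) / l) * Real.log (Real.cosh (l * t / 2)) :=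
      mul_le_mul hcoeff (sq_div_le_log_cosh _) (by positivity)
        (logCoshWeight_coeff_nonneg hl (by linarith))

end LogCoshWeight

theorem wExp_le_logCoshWeight {ε : ℝ} (hε : 0 < ε) (hε1 : ε < 1 / 2) (t : ℝ) :
    wExp ε t ≤ logCoshWeight ε t := by
  unfold wExp
  split_ifs with ht
  · have hs : ε * |t| / 2 ≤ 1 / ε :=
      calc ε * |t| / 2 ≤ ε * (2 / ε ^ 2) / 2 := by gcongr
        _ = 1 / ε := by field_simp
    have hquad : 1 + (ε * t / 2) ^ 2 / 2 ≤ Real.exp (1 / ε) :=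
      calc 1 + (ε * t / 2) ^ 2 / 2 ≤ 1 + ε * |t| / 2 + (ε * |t| / 2) ^ 2 / 2 := by
            rw [div_pow, div_pow, mul_pow, mul_pow, sq_abs]
            linarith [mul_nonneg hε.le (abs_nonneg t)]
        _ ≤ Real.exp (ε * |t| / 2) := Real.quadratic_le_exp_of_nonneg (by positivity)
        _ ≤ _ := Real.exp_le_exp.2 hs
    calc ε * Real.exp (-1 / ε) * t ^ 2 / 8 = ε * t ^ 2 / (8 * Real.exp (1 / ε)) := by
          rw [neg_div, Real.exp_neg]
          field_simp
      _ ≤ ε * t ^ 2 / (8 * (1 + (ε * t / 2) ^ 2 / 2)) := by gcongr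
      _ ≤ _ := quadratic_le_logCoshWeight hε hε1.le t
  · have hlin : 2 / ε ≤ ε * |t| :=
      calc 2 / ε = ε * (2 / ε ^ 2) := by field_simp
        _ ≤ _ := by gcongr; exact (not_le.1 ht).le
    refine le_trans ?_ (linear_le_logCoshWeight hε (by linarith) t)
    nlinarith [abs_nonneg t]

/-! ### Large increments -/

section LargeIncrements

variable {α ε m x y : ℝ}

theorem one_sub_mul_le_one_sub_rpow (hα : 0 ≤ α) (hε : 0 ≤ ε) (hε1 : ε < 1) :
    1 - (α + 1) * ε ≤ (1 - ε) ^ α := by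
  rcases le_total 1 α with h | h
  · have := one_add_mul_self_le_rpow_one_add (s := -ε) (by linarith) h
    rw [← sub_eq_add_neg] at this
    linarith
  · have := Real.rpow_le_rpow_of_exponent_ge (x := 1 - ε) (by linarith) (by linarith) h
    rw [Real.rpow_one] at this
    nlinarith

theorem one_sub_mul_rpow_abs_sub_le (hα : 0 ≤ α) (hε : 0 ≤ ε) (hε1 : ε < 1)
    (hy : |y| ≤ ε * |x - y|) : (1 - (α + 1) * ε) * |x - y| ^ α ≤ |x| ^ α := by
  have hx : (1 - ε) * |x - y| ≤ |x| := by linarith [abs_sub x y]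
  calc (1 - (α + 1) * ε) * |x - y| ^ α ≤ (1 - ε) ^ α * |x - y| ^ α := by
        gcongr
        exact one_sub_mul_le_one_sub_rpow hα hε hε1
    _ = ((1 - ε) * |x - y|) ^ α := (Real.mul_rpow (by linarith) (abs_nonneg _)).symm
    _ ≤ |x| ^ α := Real.rpow_le_rpow (mul_nonneg (by linarith) (abs_nonneg _)) hx hα

theorem one_sub_add_one_mul_le {k e l T z : ℝ} (hk : 0 ≤ k) (hl : 0 ≤ l) (hl1 : l ≤ 1)
    (hle : l ≤ e) (hT : 0 ≤ T) (hz : (1 - k * e) * T ≤ z) :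
    (1 - (k + 1) * e) * T ≤ (1 - l) * z := by
  refine le_trans ?_ (mul_le_mul_of_nonneg_left hz (sub_nonneg.2 hl1))
  have he : 0 ≤ e := hl.trans hle
  have hlk : 0 ≤ l * (k * e) * T := by positivity
  linarith [mul_le_mul_of_nonneg_right hle hT]

/-- The constant which collects the relative errors committed in replacing the logarithmic
weight between transported points by `|x - y| ^ α`. -/
def errorConst (α : ℝ) : ℝ := α + 5 + 1 / α + (2 ^ α + |Real.log (tailMass α 0)|)

theorem errorConst_pos (hα : 0 < α) : 0 < errorConst α := by
  unfold errorConst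
  positivity

theorem one_sub_errorConst_mul_le_logCoshWeight {e l T : ℝ} (hα : 0 < α) (hl : 0 < l) (hl1 : l ≤ 1)
    (hm : 1 ≤ m) (hy : |y| ≤ m) (hT : 0 ≤ T) (hle : l ≤ e) (hlT : l⁻¹ ≤ e * T)
    (hmT : m ^ α ≤ e * T) (hxT : (1 - (α + 1) * e) * T ≤ |x| ^ α) :
    (1 - errorConst α * e) * T ≤ logCoshWeight l (transport α x - transport α y) := by
  have hlog : -(1 / α * (e * T)) ≤ Real.log l / α := by
    rw [neg_le, ← neg_div, ← Real.log_inv, div_eq_inv_mul, one_div]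
    gcongr
    linarith [Real.log_le_sub_one_of_pos (inv_pos.2 hl)]
  have htail := mul_le_mul_of_nonneg_left hmT
    (by positivity : 0 ≤ 2 ^ α + |Real.log (tailMass α 0)|)
  have hx := one_sub_add_one_mul_le (by positivity) hl.le hl1 hle hT hxT
  have hθ := le_abs_transport_sub (x := x) hα hl hl1 hm hy
  calc (1 - errorConst α * e) * T = (1 - (errorConst α - 1 + 1) * e) * T := by ring
    _ ≤ (1 - l) * (|transport α x - transport α y| - 2 / l) := by
      refine one_sub_add_one_mul_le ?_ hl.le hl1 hle hT ?_
      · unfold errorConst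
        linarith [one_div_pos.2 hα, Real.rpow_pos_of_pos two_pos α,
          abs_nonneg (Real.log (tailMass α 0))]
      · rw [errorConst, div_eq_mul_inv 2 l]
        linarith
    _ ≤ _ := linear_le_logCoshWeight hl hl1 _

theorem rpow_abs_sub_le_logCoshWeight_transport (hα : 0 < α) (hε : 0 < ε) (hε1 : ε < 1)
    (hm : 1 ≤ m) (hy : |y| ≤ m) (hxy : m / ε ≤ |x - y|) :
    (1 - errorConst α * ε ^ min (α / 2) 1) * |x - y| ^ α ≤
      logCoshWeight ((m / ε) ^ (α / 2))⁻¹ (transport α x - transport α y) := by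
  have hR1 : 1 ≤ m / ε := (one_le_div hε).2 (by linarith)
  have hεe : ε ≤ ε ^ min (α / 2) 1 := by
    simpa using Real.rpow_le_rpow_of_exponent_ge hε hε1.le (min_le_right (α / 2) 1)
  have hle : ((m / ε) ^ (α / 2))⁻¹ ≤ ε ^ min (α / 2) 1 := by
    rw [← Real.inv_rpow (by positivity), inv_div]
    refine le_trans ?_ (Real.rpow_le_rpow_of_exponent_ge hε hε1.le (min_le_left (α / 2) 1))
    gcongr
    exact div_le_self hε.le hm
  have hT : (m / ε) ^ α ≤ |x - y| ^ α := by gcongr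
  have hmx : m ≤ ε * |x - y| := (div_le_iff₀' hε).1 hxy
  refine one_sub_errorConst_mul_le_logCoshWeight hα (by positivity)
    (inv_le_one_of_one_le₀ (Real.one_le_rpow hR1 (by positivity))) hm hy (by positivity) hle
    ?_ ?_ ?_
  · calc ((m / ε) ^ (α / 2))⁻¹⁻¹ = ((m / ε) ^ (α / 2))⁻¹ * (m / ε) ^ α := by
          rw [inv_inv, ← Real.rpow_neg (by positivity), ← Real.rpow_add (by positivity)]
          ring_nf
      _ ≤ _ := by gcongr
  · calc m ^ α ≤ (ε * |x - y|) ^ α := by gcongr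
      _ = ε ^ α * |x - y| ^ α := Real.mul_rpow hε.le (abs_nonneg _)
      _ ≤ _ := mul_le_mul_of_nonneg_right (Real.rpow_le_rpow_of_exponent_ge hε hε1.le
          ((min_le_left _ _).trans (by linarith))) (by positivity)
  · refine le_trans ?_ (one_sub_mul_rpow_abs_sub_le hα.le hε.le hε1 (hy.trans hmx))
    gcongr

end LargeIncrements

/-! ### Small increments -/

theorem rpow_le_mul_exp_half {q s : ℝ} (hq : 0 < q) (hs : 0 ≤ s) :
    s ^ q ≤ (2 * q) ^ q * Real.exp (s / 2) :=
  calc s ^ q = (2 * q) ^ q * (s / (2 * q)) ^ q := by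
        rw [← Real.mul_rpow (by positivity) (by positivity), mul_div_cancel₀ _ (by positivity)]
    _ ≤ (2 * q) ^ q * Real.exp (s / (2 * q)) ^ q := by
        gcongr
        linarith [Real.add_one_le_exp (s / (2 * q))]
    _ = (2 * q) ^ q * Real.exp (s / 2) := by
        rw [← Real.exp_mul]
        congr 2
        field_simp

theorem exists_slope_mul_abs_sub_le_abs_transport_sub {α : ℝ} (hα : 0 < α) :
    ∃ b > (0 : ℝ), ∀ S ≥ (1 : ℝ), ∀ x y : ℝ, |x| ≤ 2 * S ^ (2 / α) → |y| ≤ 2 * S ^ (2 / α) →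
      b * S ^ (-(1 / α)) * Real.exp (-(S / 4)) * |x - y| ≤ |transport α x - transport α y| := by
  have hN := tailMass_pos hα 0
  refine ⟨(2 ^ (-α) / 4) ^ (1 / α) / tailMass α 0, by positivity, fun S hS x y hx hy => ?_⟩
  have hS0 : 0 < S := by linarith
  have h2α : (2 : ℝ) ^ (-α) ≤ 1 := Real.rpow_le_one_of_one_le_of_nonpos one_le_two (by linarith)
  have hδ1 : 2 ^ (-α) / 4 * S⁻¹ ≤ 1 := by
    calc 2 ^ (-α) / 4 * S⁻¹ ≤ 1 / 4 * 1 := by gcongr; exact inv_le_one_of_one_le₀ hS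
      _ ≤ 1 := by norm_num
  -- The tilt `δ` is chosen so that `δ * (2 * S ^ (2 / α)) ^ α = S / 4`.
  have hexp : -(2 ^ (-α) / 4 * S⁻¹) * (2 * S ^ (2 / α)) ^ α = -(S / 4) := by
    rw [Real.mul_rpow zero_le_two (by positivity), ← Real.rpow_mul hS0.le,
      div_mul_cancel₀ _ hα.ne', Real.rpow_two, Real.rpow_neg zero_le_two]
    field_simp
  refine le_of_eq_of_le ?_ (mul_abs_sub_le_abs_transport_sub hα (by positivity) hδ1 hx hy)
  rw [hexp, Real.mul_rpow (by positivity) (by positivity), Real.inv_rpow hS0.le,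
    ← Real.rpow_neg hS0.le]
  ring

theorem one_add_sq_le_mul_rpow {a b S t : ℝ} (ha : 0 ≤ a) (hb : 0 ≤ b) (hS : 1 ≤ S)
    (ht : |t| ≤ S ^ (2 * a)) :
    1 + (S⁻¹ * (b * S ^ (-a) * Real.exp (-(S / 4)) * t) / 2) ^ 2 / 2
      ≤ (1 + b ^ 2) * S ^ (4 * a) := by
  have hS0 : 0 < S := by linarith
  have hS1 : 1 ≤ S ^ (4 * a) := Real.one_le_rpow hS (by positivity)
  have ht2 : t ^ 2 ≤ S ^ (4 * a) :=
    calc t ^ 2 = |t| ^ 2 := (sq_abs t).symm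
      _ ≤ (S ^ (2 * a)) ^ 2 := by gcongr
      _ = S ^ (4 * a) := by
        rw [← Real.rpow_mul_natCast hS0.le]
        ring_nf
  calc _ = 1 + S⁻¹ ^ 2 * (b * S ^ (-a) * Real.exp (-(S / 4))) ^ 2 * t ^ 2 / 8 := by ring
    _ ≤ S ^ (4 * a) + 1 ^ 2 * (b * 1 * 1) ^ 2 * S ^ (4 * a) / 1 := by
      gcongr
      · exact inv_le_one_of_one_le₀ hS
      · exact Real.rpow_le_one_of_one_le_of_nonpos hS (by linarith)
      · exact Real.exp_le_one_iff.2 (by linarith)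
      · norm_num
    _ = _ := by ring

theorem exists_exp_neg_mul_sq_le_logCoshWeight {a b : ℝ} (ha : 0 < a) (hb : 0 < b) :
    ∃ K > (0 : ℝ), ∀ S ≥ (2 : ℝ), ∀ t : ℝ, |t| ≤ S ^ (2 * a) →
      K⁻¹ * Real.exp (-S) * t ^ 2 ≤
        logCoshWeight S⁻¹ (b * S ^ (-a) * Real.exp (-(S / 4)) * t) := by
  have hq : 0 < 1 + 6 * a := by positivity
  refine ⟨8 * (1 + b ^ 2) * (2 * (1 + 6 * a)) ^ (1 + 6 * a) / b ^ 2, by positivity,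
    fun S hS t ht => ?_⟩
  have hS0 : 0 < S := by linarith
  have hexp : Real.exp (-S) * Real.exp (S / 2) = Real.exp (-(S / 4)) ^ 2 := by
    rw [← Real.exp_add, ← Real.exp_nat_mul]
    ring_nf
  have hpow : S ^ (1 + 6 * a) = S * (S ^ a) ^ 2 * S ^ (4 * a) := by
    rw [show 1 + 6 * a = 1 + a * (2 : ℕ) + 4 * a by push_cast; ring, Real.rpow_add hS0,
      Real.rpow_add hS0, Real.rpow_one, Real.rpow_mul_natCast hS0.le]
  calc _ = b ^ 2 * t ^ 2 * Real.exp (-(S / 4)) ^ 2 /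
        (8 * (1 + b ^ 2) * ((2 * (1 + 6 * a)) ^ (1 + 6 * a) * Real.exp (S / 2))) := by
        rw [← hexp]
        field_simp
    _ ≤ b ^ 2 * t ^ 2 * Real.exp (-(S / 4)) ^ 2 / (8 * (1 + b ^ 2) * S ^ (1 + 6 * a)) := by
        gcongr
        exact rpow_le_mul_exp_half hq hS0.le
    _ = S⁻¹ * (b * S ^ (-a) * Real.exp (-(S / 4)) * t) ^ 2 /
        (8 * ((1 + b ^ 2) * S ^ (4 * a))) := by
        rw [hpow, Real.rpow_neg hS0.le]
        field_simp
    _ ≤ S⁻¹ * (b * S ^ (-a) * Real.exp (-(S / 4)) * t) ^ 2 /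
        (8 * (1 + (S⁻¹ * (b * S ^ (-a) * Real.exp (-(S / 4)) * t) / 2) ^ 2 / 2)) := by
        gcongr
        exact one_add_sq_le_mul_rpow ha.le hb.le (by linarith) ht
    _ ≤ _ := quadratic_le_logCoshWeight (inv_pos.2 hS0)
        (by rw [one_div]; exact inv_anti₀ two_pos hS) _

theorem exists_exp_neg_mul_sq_le_logCoshWeight_transport {α : ℝ} (hα : 0 < α) :
    ∃ K > (0 : ℝ), ∀ ε ∈ Set.Ioo (0 : ℝ) 1, ∀ m ≥ (1 : ℝ), 2 ≤ (m / ε) ^ (α / 2) →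
      ∀ x y : ℝ, |y| ≤ m → |x - y| ≤ m / ε →
        K⁻¹ * Real.exp (-(m / ε) ^ (α / 2)) * (x - y) ^ 2 ≤
          logCoshWeight ((m / ε) ^ (α / 2))⁻¹ (transport α x - transport α y) := by
  obtain ⟨b, hb, hslope⟩ := exists_slope_mul_abs_sub_le_abs_transport_sub hα
  obtain ⟨K, hK, hweight⟩ := exists_exp_neg_mul_sq_le_logCoshWeight (one_div_pos.2 hα) hb
  refine ⟨K, hK, fun ε ⟨hε, hε1⟩ m hm hS x y hy hxy => ?_⟩
  have hR : m / ε = ((m / ε) ^ (α / 2)) ^ (2 / α) := by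
    rw [← Real.rpow_mul (by positivity), div_mul_div_cancel₀ two_ne_zero, div_self hα.ne',
      Real.rpow_one]
  have hyR : |y| ≤ m / ε := hy.trans (le_div_self (by linarith) hε hε1.le)
  have hxR : |x| ≤ 2 * (m / ε) := by linarith [abs_sub_abs_le_abs_sub x y]
  refine (hweight _ hS (x - y) ?_).trans
    (logCoshWeight_le_of_abs_le (by positivity) (inv_le_one_of_one_le₀ (by linarith)) ?_)
  · rwa [mul_one_div, ← hR]
  · rw [abs_mul, abs_of_pos (by positivity)]
    refine hslope _ (by linarith) x y ?_ ?_ <;> rw [← hR]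
    · exact hxR
    · linarith [abs_nonneg y]

theorem two_le_div_rpow {α ε m : ℝ} (hα : 0 < α) (hε : 0 < ε) (hε' : ε ≤ 2 ^ (-(2 / α)))
    (hm : 1 ≤ m) : 2 ≤ (m / ε) ^ (α / 2) := by
  have h : (2 : ℝ) ^ (2 / α) ≤ m / ε := by
    rw [le_div_iff₀ hε]
    calc (2 : ℝ) ^ (2 / α) * ε ≤ 2 ^ (2 / α) * 2 ^ (-(2 / α)) := by gcongr
      _ = 1 := by rw [← Real.rpow_add two_pos, add_neg_cancel, Real.rpow_zero]
      _ ≤ m := hm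
  calc (2 : ℝ) = (2 ^ (2 / α)) ^ (α / 2) := by
        rw [← Real.rpow_mul zero_le_two, div_mul_div_cancel₀ hα.ne', div_self two_ne_zero,
          Real.rpow_one]
    _ ≤ _ := by gcongr

theorem exists_wAlpha_le_logCoshWeight {α : ℝ} (hα : 0 < α) :
    ∃ κ > (0 : ℝ), ∃ ε₀ ∈ Set.Ioo (0 : ℝ) 1, ∀ ε ∈ Set.Ioo (0 : ℝ) ε₀, ∀ m : ℝ, 1 ≤ m →
      ∃ l > (0 : ℝ), l < 1 ∧ ∀ x y : ℝ, |y| ≤ m →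
        wAlpha α κ ε m (x - y) ≤ logCoshWeight l (transport α x - transport α y) := by
  obtain ⟨K, hK, hsmall⟩ := exists_exp_neg_mul_sq_le_logCoshWeight_transport hα
  have hE := errorConst_pos hα
  refine ⟨errorConst α + K, by positivity, min (1 / 2) (2 ^ (-(2 / α))),
    ⟨by positivity, (min_le_left _ _).trans_lt (by norm_num)⟩, ?_⟩
  rintro ε ⟨hε, hε₀⟩ m hm
  have hε1 : ε < 1 := hε₀.trans ((min_le_left _ _).trans_lt (by norm_num))
  have hS := two_le_div_rpow hα hε (hε₀.le.trans (min_le_right _ _)) hm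
  refine ⟨((m / ε) ^ (α / 2))⁻¹, by positivity, inv_lt_one_of_one_lt₀ (by linarith),
    fun x y hy => ?_⟩
  unfold wAlpha
  split_ifs with hxy
  · refine le_trans ?_ (hsmall ε ⟨hε, hε1⟩ m hm hS x y hy hxy)
    gcongr
    linarith
  · refine le_trans ?_
      (rpow_abs_sub_le_logCoshWeight_transport hα hε hε1 hm hy (not_le.1 hxy).le)
    gcongr
    linarith

/-! ### The τ-property -/

theorem tauProperty_nuPi_one {ε : ℝ} (hε : 0 < ε) (hε1 : ε < 1 / 2) (n : ℕ) :
    TauProperty (nuPi 1 n) (fun x => ∑ i, wExp ε (x i)) := by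
  have := isProbabilityMeasure_nuAlpha one_pos
  have h := truncatedTauProperty_pi (fun _ : Fin n => twoFunctionBound_nuAlpha_one hε (by linarith))
    (fun _ _ _ => logCoshWeight_nonneg hε (by linarith) _)
    fun _ x y _ => wExp_le_logCoshWeight hε hε1 (x - y)
  exact fun f hf => h f hf fun x hx => absurd (fun i _ => Set.mem_univ (x i)) hx

theorem truncatedTauProperty_nuPi {α l m : ℝ} {w : ℝ → ℝ} (hα : 0 < α) (hl : 0 < l) (hl1 : l < 1)
    (hw : ∀ x y : ℝ, |y| ≤ m → w (x - y) ≤ logCoshWeight l (transport α x - transport α y))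
    (n : ℕ) : TruncatedTauProperty (nuPi α n) (fun x => ∑ i, w (x i)) (linftyBall m n) := by
  have := isProbabilityMeasure_nuAlpha hα
  have hball : linftyBall m n = Set.univ.pi fun _ => {y | |y| ≤ m} := by
    ext x
    simp [linftyBall]
  rw [hball]
  exact truncatedTauProperty_pi
    (fun _ => (twoFunctionBound_nuAlpha hα hl hl1).mono (Set.subset_univ _) fun _ _ _ => le_rfl)
    (fun _ _ _ => logCoshWeight_nonneg hl hl1.le _) fun _ => hw

theorem tau_property_nuAlpha_general (α : ℝ) (hα : 0 < α) :
    (∀ ε : ℝ, 0 < ε → ε < 1 / 2 → ∀ n : ℕ,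
      TauProperty (nuPi 1 n) (fun x => ∑ i, wExp ε (x i))) ∧
    (∃ κ > (0 : ℝ), ∃ ε₀ ∈ Set.Ioo (0 : ℝ) 1,
      ∀ ε ∈ Set.Ioo (0 : ℝ) ε₀, ∀ m : ℝ, 1 ≤ m → ∀ n : ℕ,
        TruncatedTauProperty (nuPi α n) (fun x => ∑ i, wAlpha α κ ε m (x i))
          (linftyBall m n)) := by
  refine ⟨fun ε hε hε1 n => tauProperty_nuPi_one hε hε1 n, ?_⟩
  obtain ⟨κ, hκ, ε₀, hε₀, h⟩ := exists_wAlpha_le_logCoshWeight hα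
  refine ⟨κ, hκ, ε₀, hε₀, fun ε hε m hm n => ?_⟩
  obtain ⟨l, hl, hl1, hw⟩ := h ε hε m hm
  exact truncatedTauProperty_nuPi hα hl hl1 hw n

/-- Proposition (inf-convolution inequalities for `ν_α^n`). -/
theorem tau_property_nuAlpha (α : ℝ) (hα : 0 < α) :
    -- (a) the case α = 1
    (α = 1 → ∀ ε : ℝ, 0 < ε → ε < 1/2 → ∀ n : ℕ,
      TauProperty (nuPi 1 n) (fun x => ∑ i, wExp ε (x i))) ∧
    -- (b) the case α ≠ 1
    (α ≠ 1 → ∃ κ > (0 : ℝ), ∃ ε₀ ∈ Set.Ioo (0 : ℝ) 1,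
      ∀ ε ∈ Set.Ioo (0 : ℝ) ε₀, ∀ m : ℝ, 1 ≤ m → ∀ n : ℕ,
        TruncatedTauProperty (nuPi α n) (fun x => ∑ i, wAlpha α κ ε m (x i))
          (linftyBall m n)) := by
  exact (tau_property_nuAlpha_general α hα).imp (fun h _ => h) fun h _ => h

end
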